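/- Let A₁, …, Aₙ be n × n complex Hermitian positive semidefinite matrices and 2 ≤ m ≤ n. Then D(A₁, …, A_m, A_{m+1}, …, Aₙ)^m ≥ ∏_{i=1}^m D(Aᵢ[m], A_{m+1}, …, Aₙ), where Aᵢ[m] denotes m repeated copies of Aᵢ. -/

import Mathlib

open scoped ComplexOrder

/-- The mixed discriminant of `n` complex `n × n` matrices. -/
noncomputable def mixedDisc {n : ℕ} (A : Fin n → Matrix (Fin n) (Fin n) ℂ) : ℂ :=
  (n.factorial : ℂ)⁻¹ * ∑ σ : Equiv.Perm (Fin n), (Matrix.of fun i j => A (σ j) i j).det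

/-!
Call a form on matrices stable if it does not vanish on `(Z, …, Z)` whenever `Z` has positive
definite imaginary part. The determinant `D(Z, …, Z)` is stable, and by the Gauss–Lucas theorem
stability survives when an argument `Z` is replaced by a positive definite matrix, since this is
differentiation in that direction. Hence for positive definite `X, Y, C₃, …, Cₙ` the real quadratic
`z ↦ D(zX + Y, zX + Y, C₃, …, Cₙ)` has no root in the upper half-plane, and its nonnegative
discriminant is Alexandrov's inequality `D(X, Y, …)² ≥ D(X, X, …) D(Y, Y, …)`. Stability also keeps
`D` from vanishing on positive definite arguments, so by connectedness it is positive there, and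
semidefinite arguments are limits of definite ones.

For the inequality with `m` arguments, consider on maps `φ : Fin m → Fin m` the function
`m log D(A_{φ 1}, …, A_{φ m}, …) - ∑ i, log D(A_{φ i}[m], …)`. It vanishes at constant maps, and
Alexandrov's inequality makes it superharmonic for the move replacing one of two values by the
other; a minimum principle then shows that it is nonnegative.
-/

section MinimumPrinciple

variable {ι : Type*} [DecidableEq ι]

-- Fix a value taken by some minimizer; a minimizer taking it as often as possible is constant.
theorem exists_const_le_of_update_add_update_le [Finite ι] {α M : Type*} [Finite α] [Nonempty α]
    [AddCommMonoid M] [LinearOrder M] [IsOrderedCancelAddMonoid M] {g : (ι → α) → M}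
    (hg : ∀ φ a b, g (Function.update φ a (φ b)) + g (Function.update φ b (φ a)) ≤ g φ + g φ) :
    ∃ v : α, ∀ φ, g (fun _ => v) ≤ g φ := by
  classical
  have := Fintype.ofFinite ι
  obtain ⟨φ₀, hφ₀⟩ := Finite.exists_min g
  obtain hι | ⟨⟨b₀⟩⟩ := isEmpty_or_nonempty ι
  · exact ⟨Classical.arbitrary α, fun φ => (congrArg g (Subsingleton.elim _ φ)).le⟩
  set v := φ₀ b₀ with hv
  let count (φ : ι → α) : ℕ := (Finset.univ.filter fun i => φ i = v).card
  obtain ⟨φ, hφmin, hφmax⟩ := Set.exists_max_image {φ | ∀ ψ, g φ ≤ g ψ} count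
    (Set.toFinite _) ⟨φ₀, hφ₀⟩
  have hcount : 0 < count φ :=
    (Finset.card_pos.mpr ⟨b₀, by simp [hv]⟩).trans_le (hφmax φ₀ hφ₀)
  obtain ⟨b, hb⟩ := Finset.card_pos.mp hcount
  replace hb : φ b = v := (Finset.mem_filter.mp hb).2
  refine ⟨v, ?_⟩
  suffices hφ : φ = fun _ => v from hφ ▸ hφmin
  by_contra! hne
  obtain ⟨a, ha⟩ := Function.ne_iff.mp hne
  have hmin : ∀ ψ, g (Function.update φ a v) ≤ g ψ := by
    have hle : g (Function.update φ a v) ≤ g φ :=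
      le_of_add_le_add_right ((add_le_add_right (hφmin _) _).trans (hb ▸ hg φ a b))
    exact fun ψ => hle.trans (hφmin ψ)
  have hlt : count φ < count (Function.update φ a v) := by
    refine Finset.card_lt_card (Finset.ssubset_iff_of_subset ?_ |>.mpr ⟨a, by simp, by simpa⟩)
    intro i
    by_cases hia : i = a <;> simp [hia]
  exact (hφmax _ hmin).not_gt hlt

variable [Fintype ι]

theorem sum_comp_update_add_sum_comp_update {α M : Type*} [AddCommMonoid M] (c : α → M)
    (ψ : ι → α) (a b : ι) :
    ∑ i, c (Function.update ψ a (ψ b) i) + ∑ i, c (Function.update ψ b (ψ a) i) =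
      ∑ i, c (ψ i) + ∑ i, c (ψ i) := by
  have hupdate (x : α) (j : ι) : ∑ i, c (Function.update ψ j x i) =
      c x + ∑ i ∈ Finset.univ.erase j, c (ψ i) := by
    rw [← Finset.add_sum_erase _ _ (Finset.mem_univ j), Function.update_self]
    congr 1
    exact Finset.sum_congr rfl fun i hi => by rw [Function.update_of_ne (Finset.ne_of_mem_erase hi)]
  have hsplit (j : ι) : c (ψ j) + ∑ i ∈ Finset.univ.erase j, c (ψ i) = ∑ i, c (ψ i) :=
    Finset.add_sum_erase _ (fun i => c (ψ i)) (Finset.mem_univ j)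
  rw [hupdate, hupdate, add_add_add_comm, add_comm (c (ψ b)), add_add_add_comm, hsplit,
    add_comm (∑ i ∈ _, _), hsplit]

theorem prod_map_const_le_pow_of_update_mul_update_le_sq {α : Type*} {F : (ι → α) → ℝ}
    (hpos : ∀ φ, 0 < F φ)
    (hF : ∀ φ a b, F (Function.update φ a (φ b)) * F (Function.update φ b (φ a)) ≤ F φ ^ 2)
    (φ : ι → α) : ∏ i, F (fun _ => φ i) ≤ F φ ^ Fintype.card ι := by
  obtain hι | hι := isEmpty_or_nonempty ι
  · simp
  let c (i : ι) : ℝ := Real.log (F fun _ => φ i)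
  let g (ψ : ι → ι) : ℝ := Fintype.card ι * Real.log (F (φ ∘ ψ)) - ∑ i, c (ψ i)
  have hlog (ψ : ι → ι) (a b : ι) :
      Real.log (F (φ ∘ Function.update ψ a (ψ b))) +
        Real.log (F (φ ∘ Function.update ψ b (ψ a))) ≤ 2 * Real.log (F (φ ∘ ψ)) := by
    rw [← Real.log_mul (hpos _).ne' (hpos _).ne', ← Nat.cast_two, ← Real.log_pow,
      Function.comp_update, Function.comp_update]
    exact Real.log_le_log (mul_pos (hpos _) (hpos _)) (hF (φ ∘ ψ) a b)
  obtain ⟨v, hv⟩ := exists_const_le_of_update_add_update_le (g := g) fun ψ a b => by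
    have := mul_le_mul_of_nonneg_left (hlog ψ a b) (Nat.cast_nonneg (α := ℝ) (Fintype.card ι))
    have hsum := sum_comp_update_add_sum_comp_update c ψ a b
    simp only [g]
    linarith
  have hid : 0 ≤ g id := by
    refine le_of_eq_of_le ?_ (hv id)
    simp [g, c, Function.comp_def]
  have hlog_prod : Real.log (∏ i, F fun _ => φ i) ≤ Real.log (F φ ^ Fintype.card ι) := by
    rw [Real.log_prod fun i _ => (hpos _).ne', Real.log_pow]
    exact sub_nonneg.mp hid
  exact (Real.log_le_log_iff (Finset.prod_pos fun i _ => hpos _) (pow_pos (hpos _) _)).mp hlog_prod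

end MinimumPrinciple

section StablePolynomial

open Polynomial

theorem derivative_eval_ne_zero_of_im_nonneg {P : ℂ[X]} (hdeg : 0 < P.degree)
    (hP : ∀ z : ℂ, 0 ≤ z.im → P.eval z ≠ 0) {z : ℂ} (hz : 0 ≤ z.im) :
    P.derivative.eval z ≠ 0 := by
  intro h
  have hP' : P.derivative ≠ 0 := by
    rw [Ne, derivative_eq_zero]
    exact (natDegree_pos_iff_degree_pos.mpr hdeg).ne'
  have hroots : P.rootSet ℂ ⊆ {w : ℂ | w.im < 0} := by
    intro w hw
    by_contra hw'
    exact hP w (not_lt.mp hw') (by simpa using (mem_rootSet.mp hw).2)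
  have hzroot : z ∈ P.derivative.rootSet ℂ := mem_rootSet.mpr ⟨hP', by simpa using h⟩
  have hzim : z.im < 0 := convexHull_min hroots (convex_halfSpace_im_lt 0)
    (rootSet_derivative_subset_convexHull_rootSet hdeg hzroot)
  exact hzim.not_ge hz

theorem discrim_nonneg_of_forall_im_pos_ne_zero {a b c : ℝ}
    (h : ∀ z : ℂ, 0 < z.im → (a : ℂ) * (z * z) + b * z + c ≠ 0) : 0 ≤ discrim a b c := by
  obtain rfl | ha := eq_or_ne a 0
  · simp [discrim, sq_nonneg]
  obtain ⟨z, hz⟩ : ∃ z : ℂ, (a : ℂ) * (z * z) + b * z + c = 0 :=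
    exists_quadratic_eq_zero (by exact_mod_cast ha)
      ((IsAlgClosed.exists_pow_nat_eq _ two_pos).imp fun s hs => hs.symm.trans (sq s))
  have hconj : (a : ℂ) * (star z * star z) + b * star z + c = 0 := by
    simpa using congrArg star hz
  have him : z.im = 0 := by
    refine le_antisymm (not_lt.mp fun hz' => h z hz' hz) (not_lt.mp fun hz' => h _ ?_ hconj)
    simpa using hz'
  lift z to ℝ using him
  rw [discrim_eq_sq_of_quadratic_eq_zero (x := z) (by exact_mod_cast hz)]
  positivity

end StablePolynomial

section LinePolynomial

open Polynomial

variable {R ι : Type*} [CommSemiring R] [Fintype ι] [DecidableEq ι] {E : ι → Type*}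
  [∀ i, AddCommMonoid (E i)] [∀ i, Module R (E i)] (f : MultilinearMap R E R)

/-- The restriction of a multilinear form to the line `s ↦ s • x + y`, as a polynomial in `s`. -/
noncomputable def linePolynomial (x y : ∀ i, E i) : R[X] :=
  ∑ T : Finset ι, C (f (T.piecewise x y)) * X ^ T.card

theorem eval_linePolynomial (x y : ∀ i, E i) (s : R) :
    (linePolynomial f x y).eval s = f (s • x + y) := by
  rw [f.map_add_univ, linePolynomial, eval_finsetSum]
  refine Finset.sum_congr rfl fun T _ => ?_
  have hT : T.piecewise (s • x) y =
      T.piecewise (fun i => s • T.piecewise x y i) (T.piecewise x y) := by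
    ext i
    by_cases hi : i ∈ T <;> simp [hi]
  rw [hT, f.map_piecewise_smul, Finset.prod_const, smul_eq_mul, mul_comm]
  simp only [eval_mul, eval_C, eval_pow, eval_X]

theorem coeff_linePolynomial (x y : ∀ i, E i) (k : ℕ) :
    (linePolynomial f x y).coeff k =
      ∑ T ∈ Finset.univ.powersetCard k, f (T.piecewise x y) := by
  rw [linePolynomial, finsetSum_coeff]
  simp only [coeff_C_mul_X_pow]
  rw [← Finset.sum_filter]
  exact Finset.sum_congr (by ext T; simp [eq_comm]) fun _ _ => rfl

theorem coeff_card_linePolynomial (x y : ∀ i, E i) :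
    (linePolynomial f x y).coeff (Fintype.card ι) = f x := by
  rw [coeff_linePolynomial, ← Finset.card_univ, Finset.powersetCard_self,
    Finset.sum_singleton, Finset.piecewise_univ]

theorem derivative_linePolynomial_eval_zero (x y : ∀ i, E i) :
    (linePolynomial f x y).derivative.eval 0 = f.linearDeriv y x := by
  rw [← coeff_zero_eq_eval_zero, coeff_derivative, coeff_linePolynomial,
    Finset.powersetCard_one, Finset.sum_map, f.linearDeriv_apply]
  simp [Finset.piecewise_singleton]

end LinePolynomial

theorem map_update_update_smul_add {R ι E : Type*} [CommSemiring R] [AddCommMonoid E] [Module R E]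
    [DecidableEq ι] (f : MultilinearMap R (fun _ : ι => E) R) (C : ι → E) {a b : ι} (hab : a ≠ b)
    (z : R) :
    f (Function.update (Function.update C b (z • C a + C b)) a (z • C a + C b)) =
      f (Function.update C b (C a)) * (z * z) + (f C + f (C ∘ Equiv.swap a b)) * z +
        f (Function.update C a (C b)) := by
  have hself (Y : E) : Function.update (Function.update C b Y) a (C a) = Function.update C b Y :=
    Function.update_eq_self_iff.mpr (Function.update_of_ne hab _ _).symm
  have hupdate (X : E) : f (Function.update (Function.update C b (z • C a + C b)) a X) =
      z * f (Function.update (Function.update C b (C a)) a X) + f (Function.update C a X) := by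
    rw [Function.update_comm hab.symm, f.map_update_add, f.map_update_smul, smul_eq_mul,
      ← Function.update_comm hab.symm, ← Function.update_comm hab.symm, Function.update_eq_self]
  rw [Equiv.comp_swap_eq_update, f.map_update_add, f.map_update_smul, hupdate, hupdate, hself,
    Function.update_eq_self, smul_eq_mul]
  ring

theorem map_update_piecewise_insert {ι E R : Type*} [DecidableEq ι] {f : (ι → E) → R}
    (hsymm : ∀ C (σ : Equiv.Perm ι), f (C ∘ σ) = f C) (C : ι → E) (Z : E)
    {S : Finset ι} {a j : ι} (ha : a ∉ S) (hj : j ∈ insert a S) :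
    f (Function.update ((insert a S).piecewise (fun _ => Z) C) j (C a)) =
      f (S.piecewise (fun _ => Z) C) := by
  rw [Finset.piecewise_insert]
  obtain rfl | hjS := Finset.mem_insert.mp hj
  · rw [Function.update_idem]
    congr
    simp [ha]
  · have haj : a ≠ j := fun h => ha (h ▸ hjS)
    rw [← hsymm (S.piecewise _ C) (Equiv.swap a j), Equiv.comp_swap_eq_update,
      Function.update_comm haj]
    simp [ha, hjS]

section StableForm

variable {ι E : Type*} [AddCommMonoid E] [Module ℂ E] {K U : Set E}

/-- `U` contains the upper half-plane multiples of elements of `K` and is stable under adding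
multiples of elements of `K` by scalars of nonnegative imaginary part. The model is `K` a convex
cone of real points and `U` the tube of points with imaginary part in `K`. -/
structure IsTubeOver (K U : Set E) : Prop where
  smul_mem : ∀ ⦃B⦄, B ∈ K → ∀ ⦃s : ℂ⦄, 0 < s.im → s • B ∈ U
  smul_add_mem : ∀ ⦃B⦄, B ∈ K → ∀ ⦃Z⦄, Z ∈ U → ∀ ⦃s : ℂ⦄, 0 ≤ s.im → s • B + Z ∈ U

theorem linearDeriv_const_ne_zero [Fintype ι] [DecidableEq ι] [Nonempty ι]
    {f : MultilinearMap ℂ (fun _ : ι => E) ℂ} (hU : IsTubeOver K U)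
    (hf : ∀ Z ∈ U, f (fun _ => Z) ≠ 0) {B Z : E} (hB : B ∈ K) (hZ : Z ∈ U) :
    f.linearDeriv (fun _ => Z) (fun _ => B) ≠ 0 := by
  have hlead : f (fun _ => B) ≠ 0 := by
    have h := hf _ (hU.smul_mem hB (s := Complex.I) (by simp))
    rw [f.map_smul_univ (fun _ => Complex.I) fun _ => B] at h
    exact right_ne_zero_of_smul h
  have hdeg : 0 < (linePolynomial f (fun _ => B) fun _ => Z).degree := by
    refine Polynomial.natDegree_pos_iff_degree_pos.mp (Fintype.card_pos (α := ι) |>.trans_le ?_)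
    exact Polynomial.le_natDegree_of_ne_zero (by rwa [coeff_card_linePolynomial])
  rw [← derivative_linePolynomial_eval_zero]
  refine derivative_eval_ne_zero_of_im_nonneg hdeg (fun s hs => ?_) (le_refl _)
  rw [eval_linePolynomial]
  exact hf _ (hU.smul_add_mem hB hZ hs)

theorem map_piecewise_ne_zero_of_insert [DecidableEq ι]
    {f : MultilinearMap ℂ (fun _ : ι => E) ℂ} (hU : IsTubeOver K U)
    (hsymm : ∀ C (σ : Equiv.Perm ι), f (C ∘ σ) = f C) {C : ι → E} {S : Finset ι} {a : ι}
    (ha : a ∉ S) (hCa : C a ∈ K)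
    (hf : ∀ Z ∈ U, f ((insert a S).piecewise (fun _ => Z) C) ≠ 0) {Z : E} (hZ : Z ∈ U) :
    f (S.piecewise (fun _ => Z) C) ≠ 0 := by
  set W := insert a S
  have : Nonempty {i // i ∈ W} := ⟨a, Finset.mem_insert_self a S⟩
  let fW : MultilinearMap ℂ (fun _ : {i // i ∈ W} => E) ℂ :=
    f.domDomRestrict (· ∈ W) fun i => C i
  have hfW (x : {i // i ∈ W} → E) :
      fW x = f (fun i => if h : i ∈ W then x ⟨i, h⟩ else C i) :=
    f.domDomRestrict_apply _ _ _
  have hconst (Z : E) : fW (fun _ => Z) = f (W.piecewise (fun _ => Z) C) := by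
    rw [hfW]
    rfl
  have hupdate (j : {i // i ∈ W}) :
      fW (Function.update (fun _ => Z) j (C a)) = f (S.piecewise (fun _ => Z) C) := by
    rw [← map_update_piecewise_insert hsymm C Z ha j.2, hfW]
    congr with i
    change _ = Function.update (W.piecewise (fun _ => Z) C) j (C a) i
    by_cases hi : i ∈ W
    · simp [hi, Function.update_apply, Subtype.ext_iff]
    · simp [hi, show i ≠ j from fun hij => hi (hij ▸ j.2)]
  have h := linearDeriv_const_ne_zero hU (fun Z hZ => (hconst Z).trans_ne (hf Z hZ)) hCa hZ
  rw [fW.linearDeriv_apply, Finset.sum_congr rfl fun j _ => hupdate j, Finset.sum_const] at h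
  exact right_ne_zero_of_smul h

theorem map_piecewise_ne_zero [Finite ι] [DecidableEq ι]
    {f : MultilinearMap ℂ (fun _ : ι => E) ℂ} (hU : IsTubeOver K U)
    (hsymm : ∀ C (σ : Equiv.Perm ι), f (C ∘ σ) = f C) (hf : ∀ Z ∈ U, f (fun _ => Z) ≠ 0)
    {C : ι → E} (hC : ∀ i, C i ∈ K) (S : Finset ι) {Z : E} (hZ : Z ∈ U) :
    f (S.piecewise (fun _ => Z) C) ≠ 0 := by
  have := Fintype.ofFinite ι
  induction hS : Sᶜ using Finset.induction_on generalizing S Z with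
  | empty =>
    rw [(Finset.compl_eq_empty_iff S).mp hS, Finset.piecewise_univ]
    exact hf Z hZ
  | insert a T ha ih =>
    have haS : a ∉ S := Finset.mem_compl.mp (hS ▸ Finset.mem_insert_self a T)
    refine map_piecewise_ne_zero_of_insert hU hsymm haS (hC a) (fun Z hZ => ih _ hZ ?_) hZ
    rw [Finset.compl_insert, hS, Finset.erase_insert ha]

theorem map_update_mul_map_update_le_sq [Finite ι] [DecidableEq ι]
    {f : MultilinearMap ℂ (fun _ : ι => E) ℂ} (hU : IsTubeOver K U)
    (hsymm : ∀ C (σ : Equiv.Perm ι), f (C ∘ σ) = f C) (hf : ∀ Z ∈ U, f (fun _ => Z) ≠ 0)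
    (hreal : ∀ C : ι → E, (∀ i, C i ∈ K) → (f C).im = 0) {C : ι → E} (hC : ∀ i, C i ∈ K)
    (a b : ι) :
    (f (Function.update C a (C b))).re * (f (Function.update C b (C a))).re ≤ (f C).re ^ 2 := by
  obtain rfl | hab := eq_or_ne a b
  · simp [sq]
  have hre (i j : ι) : ((f (Function.update C i (C j))).re : ℂ) = f (Function.update C i (C j)) :=
    Complex.ext rfl (hreal _ ((Function.forall_update_iff C fun _ X => X ∈ K).mpr
      ⟨hC j, fun k _ => hC k⟩)).symm
  have hreC : ((f C).re : ℂ) = f C := Complex.ext rfl (hreal C hC).symm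
  have hdiscrim := discrim_nonneg_of_forall_im_pos_ne_zero (a := (f (Function.update C b (C a))).re)
    (b := 2 * (f C).re) (c := (f (Function.update C a (C b))).re) fun z hz => by
      have hZ : z • C a + C b ∈ U := by
        simpa [add_comm] using
          hU.smul_add_mem (hC b) (hU.smul_mem (hC a) hz) (s := 1) (by simp)
      have h := map_piecewise_ne_zero hU hsymm hf hC {a, b} hZ
      rw [Finset.piecewise_insert, Finset.piecewise_singleton,
        map_update_update_smul_add f C hab, hsymm] at h
      simpa [hre, hreC, two_mul] using h
  rw [discrim] at hdiscrim
  linarith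

end StableForm

theorem posSemidef_subset_closure_posDef {ι : Type*} :
    {B : Matrix ι ι ℂ | B.PosSemidef} ⊆ closure {B | B.PosDef} := by
  classical
  intro B hB
  have hlim : Filter.Tendsto (fun ε : ℝ => B + ε • (1 : Matrix ι ι ℂ))
      (nhdsWithin 0 (Set.Ioi 0)) (nhds B) := by
    have hcont : Continuous fun ε : ℝ => B + ε • (1 : Matrix ι ι ℂ) := by fun_prop
    simpa using (hcont.tendsto 0).mono_left nhdsWithin_le_nhds
  refine mem_closure_of_tendsto hlim ?_
  filter_upwards [self_mem_nhdsWithin] with ε hε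
  exact Matrix.PosDef.posSemidef_add hB (Matrix.PosDef.one.smul hε)

section UpperHalfMatrix

/-- The matrices with positive definite imaginary part, described by their quadratic form. -/
def upperHalfMatrices (ι : Type*) [Fintype ι] : Set (Matrix ι ι ℂ) :=
  {Z | ∀ v : ι → ℂ, v ≠ 0 → 0 < (star v ⬝ᵥ Z.mulVec v).im}

variable {ι : Type*} [Fintype ι]

theorem det_ne_zero_of_mem_upperHalfMatrices [DecidableEq ι] {Z : Matrix ι ι ℂ}
    (hZ : Z ∈ upperHalfMatrices ι) : Z.det ≠ 0 := by
  intro h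
  obtain ⟨v, hv, hv0⟩ := Matrix.exists_mulVec_eq_zero_iff.mpr h
  simpa [hv0] using hZ v hv

theorem isTubeOver_upperHalfMatrices :
    IsTubeOver {B : Matrix ι ι ℂ | B.PosDef} (upperHalfMatrices ι) := by
  have hpos {B : Matrix ι ι ℂ} (hB : B.PosDef) {v : ι → ℂ} (hv : v ≠ 0) (s : ℂ) :
      ∃ r : ℝ, 0 < r ∧ (star v ⬝ᵥ (s • B).mulVec v).im = s.im * r := by
    obtain ⟨hre, him⟩ := Complex.pos_iff.mp (hB.dotProduct_mulVec_pos hv)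
    exact ⟨_, hre, by simp [Matrix.smul_mulVec, ← him]⟩
  constructor
  · intro B hB s hs v hv
    obtain ⟨r, hr, h⟩ := hpos hB hv s
    exact h ▸ mul_pos hs hr
  · intro B hB Z hZ s hs v hv
    obtain ⟨r, hr, h⟩ := hpos hB hv s
    rw [Matrix.add_mulVec, dotProduct_add, Complex.add_im, h]
    exact add_pos_of_nonneg_of_pos (mul_nonneg hs hr.le) (hZ v hv)

end UpperHalfMatrix

theorem extend_update {κ ι α : Type*} [DecidableEq κ] [DecidableEq ι] {e : κ → ι}
    (he : e.Injective) (φ : κ → α) (k : κ) (v : α) (C : ι → α) :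
    Function.extend e (Function.update φ k v) C =
      Function.update (Function.extend e φ C) (e k) v := by
  ext i
  by_cases hi : ∃ j, e j = i
  · obtain ⟨j, rfl⟩ := hi
    obtain rfl | hjk := eq_or_ne j k
    · simp [he.extend_apply]
    · simp [he.extend_apply, hjk, he.ne hjk]
  · have hik : i ≠ e k := fun h => hi ⟨k, h.symm⟩
    simp [Function.extend_apply' _ _ _ hi, hik]

section MixedDisc

variable {n : ℕ} (A : Fin n → Matrix (Fin n) (Fin n) ℂ)

theorem mixedDisc_comp_perm (σ : Equiv.Perm (Fin n)) : mixedDisc (A ∘ σ) = mixedDisc A := by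
  unfold mixedDisc
  congr 1
  exact Equiv.sum_comp (Equiv.mulLeft σ) fun τ => (Matrix.of fun i j => A (τ j) i j).det

theorem mixedDisc_const (X : Matrix (Fin n) (Fin n) ℂ) : mixedDisc (fun _ => X) = X.det := by
  have hn : (n.factorial : ℂ) ≠ 0 := Nat.cast_ne_zero.mpr n.factorial_ne_zero
  have hX : (Matrix.of fun i j => X i j) = X := rfl
  simp [mixedDisc, hX, Fintype.card_perm, hn]

theorem mixedDisc_eq_sum_det_rows :
    mixedDisc A = (n.factorial : ℂ)⁻¹ *
      ∑ σ : Equiv.Perm (Fin n), (Matrix.of fun i j => A (σ i) i j).det := by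
  simp only [mixedDisc, Matrix.det_apply', Matrix.of_apply]
  congr 1
  refine Finset.sum_comm.trans (Eq.trans (Finset.sum_congr rfl fun τ _ => ?_) Finset.sum_comm)
  rw [← Finset.mul_sum, ← Finset.mul_sum]
  congr 1
  exact (Equiv.sum_comp (Equiv.mulRight τ) fun σ => ∏ i, A (σ i) (τ i) i).symm

theorem mixedDisc_conjTranspose :
    mixedDisc (fun i => (A i).conjTranspose) = star (mixedDisc A) := by
  rw [mixedDisc, mixedDisc_eq_sum_det_rows, star_mul', star_sum]
  congr 1
  · simp
  · exact Finset.sum_congr rfl fun σ _ => Matrix.det_conjTranspose _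

variable {A} in
theorem mixedDisc_im_eq_zero (hA : ∀ i, (A i).IsHermitian) : (mixedDisc A).im = 0 := by
  have h := mixedDisc_conjTranspose A
  simp only [(hA _).eq] at h
  exact Complex.conj_eq_iff_im.mp h.symm

theorem continuous_mixedDisc :
    Continuous (mixedDisc : (Fin n → Matrix (Fin n) (Fin n) ℂ) → ℂ) := by
  unfold mixedDisc
  refine continuous_const.mul (continuous_finsetSum _ fun σ _ => Continuous.matrix_det ?_)
  exact continuous_matrix fun i j => by simpa only [Matrix.of_apply] using by fun_prop

theorem of_update_eq_updateCol (k : Fin n) (X : Matrix (Fin n) (Fin n) ℂ)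
    (σ : Equiv.Perm (Fin n)) :
    (Matrix.of fun i j => Function.update A k X (σ j) i j) =
      (Matrix.of fun i j => A (σ j) i j).updateCol (σ.symm k) fun i => X i (σ.symm k) := by
  ext i j
  obtain rfl | h := eq_or_ne j (σ.symm k)
  · simp
  · simp [h, mt (σ.eq_symm_apply).mpr h]

/-- The mixed discriminant as a multilinear map. -/
noncomputable def mixedDiscMultilinear (n : ℕ) :
    MultilinearMap ℂ (fun _ : Fin n => Matrix (Fin n) (Fin n) ℂ) ℂ :=
  MultilinearMap.mk' mixedDisc
    (fun A k X Y => by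
      simp only [mixedDisc, of_update_eq_updateCol, ← mul_add, ← Finset.sum_add_distrib,
        ← Matrix.det_updateCol_add]
      rfl)
    (fun A k c X => by
      simp only [mixedDisc, of_update_eq_updateCol, smul_eq_mul]
      rw [mul_left_comm c, Finset.mul_sum _ _ c]
      simp only [← Matrix.det_updateCol_smul]
      rfl)

variable {A}

theorem mixedDiscMultilinear_const_ne_zero {Z : Matrix (Fin n) (Fin n) ℂ}
    (hZ : Z ∈ upperHalfMatrices (Fin n)) : mixedDiscMultilinear n (fun _ => Z) ≠ 0 :=
  (mixedDisc_const Z).trans_ne (det_ne_zero_of_mem_upperHalfMatrices hZ)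

theorem mixedDisc_ne_zero (hA : ∀ i, (A i).PosDef) : mixedDisc A ≠ 0 := by
  have h := map_piecewise_ne_zero isTubeOver_upperHalfMatrices mixedDisc_comp_perm
    (f := mixedDiscMultilinear n) (fun _ => mixedDiscMultilinear_const_ne_zero) hA ∅
    (isTubeOver_upperHalfMatrices.smul_mem Matrix.PosDef.one (s := Complex.I) (by simp))
  rwa [Finset.piecewise_empty] at h

theorem mixedDisc_re_pos (hA : ∀ i, (A i).PosDef) : 0 < (mixedDisc A).re := by
  let s : Set (Fin n → Matrix (Fin n) (Fin n) ℂ) := {C | ∀ i, (C i).PosDef}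
  have hs : Convex ℝ s := convex_iff_forall_pos.mpr fun C hC C' hC' r r' hr hr' _ i =>
    ((hC i).smul hr).add ((hC' i).smul hr')
  by_contra! hneg
  obtain ⟨C, hC, hC0⟩ := hs.isPreconnected.intermediate_value (a := A) (b := fun _ => 1) hA
    (fun _ => Matrix.PosDef.one)
    (Complex.continuous_re.comp continuous_mixedDisc).continuousOn
    (show (0 : ℝ) ∈ _ from ⟨hneg, by simp [mixedDisc_const]⟩)
  exact mixedDisc_ne_zero hC
    (Complex.ext hC0 (mixedDisc_im_eq_zero fun i => (hC i).isHermitian))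

theorem mixedDisc_update_mul_le_sq (hA : ∀ i, (A i).PosDef) (a b : Fin n) :
    (mixedDisc (Function.update A a (A b))).re * (mixedDisc (Function.update A b (A a))).re ≤
      (mixedDisc A).re ^ 2 :=
  map_update_mul_map_update_le_sq (f := mixedDiscMultilinear n) isTubeOver_upperHalfMatrices
    mixedDisc_comp_perm (fun _ => mixedDiscMultilinear_const_ne_zero)
    (fun _ hC => mixedDisc_im_eq_zero fun i => (hC i).isHermitian) hA a b

variable {κ : Type*} [Fintype κ] {e : κ → Fin n}

theorem prod_mixedDisc_extend_le_pow_of_posDef (he : e.Injective) (hA : ∀ i, (A i).PosDef) :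
    ∏ k, (mixedDisc (Function.extend e (fun _ => A (e k)) A)).re ≤
      (mixedDisc A).re ^ Fintype.card κ := by
  classical
  have hext (φ : κ → κ) (i : Fin n) : (Function.extend e (A ∘ e ∘ φ) A i).PosDef := by
    by_cases hi : ∃ k, e k = i
    · obtain ⟨k, rfl⟩ := hi
      simp [he.extend_apply, hA]
    · simp [Function.extend_apply' _ _ _ hi, hA]
  have h := prod_map_const_le_pow_of_update_mul_update_le_sq
    (F := fun φ : κ → κ => (mixedDisc (Function.extend e (A ∘ e ∘ φ) A)).re)
    (fun φ => mixedDisc_re_pos (hext φ)) (fun φ a b => ?_) id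
  · have hid : Function.extend e (A ∘ e ∘ id) A = A := by
      ext1 i
      by_cases hi : ∃ k, e k = i
      · obtain ⟨k, rfl⟩ := hi
        simp [he.extend_apply]
      · simp [Function.extend_apply' _ _ _ hi]
    rwa [hid] at h
  · simpa [← Function.comp_assoc, Function.comp_update, extend_update he, he.extend_apply] using
      mixedDisc_update_mul_le_sq (hext φ) (e a) (e b)

theorem prod_mixedDisc_extend_le_pow (he : e.Injective) (hA : ∀ i, (A i).PosSemidef) :
    ∏ k, (mixedDisc (Function.extend e (fun _ => A (e k)) A)).re ≤
      (mixedDisc A).re ^ Fintype.card κ := by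
  have hcont : Continuous fun C : Fin n → Matrix (Fin n) (Fin n) ℂ => (mixedDisc C).re :=
    Complex.continuous_re.comp continuous_mixedDisc
  have hext (k : κ) : Continuous fun C : Fin n → Matrix (Fin n) (Fin n) ℂ =>
      Function.extend e (fun _ => C (e k)) C := by
    refine continuous_pi fun i => ?_
    by_cases hi : ∃ k, e k = i
    · obtain ⟨j, rfl⟩ := hi
      simpa only [he.extend_apply] using continuous_apply (e k)
    · simpa only [Function.extend_apply' _ _ _ hi] using continuous_apply i
  refine le_on_closure (s := Set.univ.pi fun _ : Fin n => {B : Matrix (Fin n) (Fin n) ℂ | B.PosDef})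
    (fun C hC => prod_mixedDisc_extend_le_pow_of_posDef he fun i => hC i (Set.mem_univ i))
    (continuous_finsetProd _ fun k _ => hcont.comp (hext k)).continuousOn
    (hcont.pow _).continuousOn ?_
  rw [closure_pi_set]
  exact fun i _ => posSemidef_subset_closure_posDef (hA i)

end MixedDisc

/-- for positive semidefinite Hermitian `A₁,…,Aₙ` and `2 ≤ m ≤ n`,
`D(A₁,…,Aₙ)^m ≥ ∏_{i=1}^m D(Aᵢ[m], A_{m+1},…,Aₙ)`. -/
theorem af_mixedDisc_higher (n m : ℕ) (hm : 2 ≤ m) (hmn : m ≤ n)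
    (A : Fin n → Matrix (Fin n) (Fin n) ℂ) (hA : ∀ i, (A i).PosSemidef) :
    (mixedDisc A).re ^ m ≥
      ∏ i : Fin m, (mixedDisc fun k : Fin n =>
        if (k : ℕ) < m then A (Fin.castLE hmn i) else A k).re := by
  have hext (i : Fin m) : (fun k : Fin n => if (k : ℕ) < m then A (Fin.castLE hmn i) else A k) =
      Function.extend (Fin.castLE hmn) (fun _ => A (Fin.castLE hmn i)) A := by
    ext1 k
    have hk : (∃ j, Fin.castLE hmn j = k) ↔ (k : ℕ) < m :=
      ⟨fun ⟨j, hj⟩ => hj ▸ j.isLt, fun hk => ⟨⟨k, hk⟩, rfl⟩⟩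
    simp [Function.extend_def, hk]
  simpa [hext] using prod_mixedDisc_extend_le_pow (Fin.castLE_injective hmn) hA
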